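/- arXiv:1011.5687 — 2 statements merged into one kernel-verified Lean document; each statement's English description precedes it below -/
import Mathlib

section
/- Kripke completeness: for every bimodal formula A, (i) A ∈ S4D if and only if F ⊨ A for every S4D-frame F; (ii) A ∈ S4DS if and only if F ⊨ A for every S4D-frame F that is a DS-frame; (iii) A ∈ S4DT1S if and only if F ⊨ A for every S4D-frame F that is both a DS-frame and a T₁-frame. -/
/-- Bimodal formulas: propositional letters, falsum, implication, box, and
the difference modality `[≠]` (called `dbox` here). -/
inductive BForm : Type
  | var : ℕ → BForm
  | bot : BForm
  | imp : BForm → BForm → BForm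
  | box : BForm → BForm
  | dbox : BForm → BForm
  deriving DecidableEq

namespace BForm

/-- Classical negation. -/
def neg (A : BForm) : BForm := imp A bot

/-- Classical conjunction. -/
def conj (A B : BForm) : BForm := neg (imp A (neg B))

/-- `◇A = ¬□¬A`. -/
def dia (A : BForm) : BForm := neg (box (neg A))

/-- `⟨≠⟩A = ¬[≠]¬A`. -/
def ddia (A : BForm) : BForm := neg (dbox (neg A))

end BForm

/-- Truth at a point of a Kripke model over a frame `(W, R, R_D)`. -/
def ksat {W : Type} (R RD : W → W → Prop) (θ : ℕ → Set W) : W → BForm → Prop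
  | x, .var n => x ∈ θ n
  | _, .bot => False
  | x, .imp A B => ksat R RD θ x A → ksat R RD θ x B
  | x, .box A => ∀ y, R x y → ksat R RD θ y A
  | x, .dbox A => ∀ y, RD x y → ksat R RD θ y A

/-- Validity in a Kripke frame: truth at every point under every valuation. -/
def kvalid {W : Type} (R RD : W → W → Prop) (A : BForm) : Prop :=
  ∀ (θ : ℕ → Set W) (x : W), ksat R RD θ x A

/-- Truth at a point of a topological model. -/
def tsat {X : Type} [TopologicalSpace X] (θ : ℕ → Set X) : X → BForm → Prop
  | x, .var n => x ∈ θ n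
  | _, .bot => False
  | x, .imp A B => tsat θ x A → tsat θ x B
  | x, .box A => ∃ U : Set X, IsOpen U ∧ x ∈ U ∧ ∀ y ∈ U, tsat θ y A
  | x, .dbox A => ∀ y, y ≠ x → tsat θ y A

/-- Validity in a topological space. -/
def tvalid (X : Type) [TopologicalSpace X] (A : BForm) : Prop :=
  ∀ (θ : ℕ → Set X) (x : X), tsat θ x A

/-- Uniform substitution of formulas for propositional letters. -/
def substF (σ : ℕ → BForm) : BForm → BForm
  | .var n => σ n
  | .bot => .bot
  | .imp A B => .imp (substF σ A) (substF σ B)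
  | .box A => .box (substF σ A)
  | .dbox A => .dbox (substF σ A)

/-- Boolean evaluation of a formula, treating letters and modal formulas as atoms. -/
def beval (v : BForm → Bool) : BForm → Bool
  | .var n => v (.var n)
  | .bot => false
  | .imp A B => !(beval v A) || beval v B
  | .box A => v (.box A)
  | .dbox A => v (.dbox A)

/-- A classical tautology of the bimodal language. -/
def Tautology (A : BForm) : Prop := ∀ v : BForm → Bool, beval v A = true

/-- The letter `p`. -/
def pLet : BForm := .var 0
/-- The letter `q`. -/
def qLet : BForm := .var 1

/-- The least bimodal logic containing `K₂`, the S4D axioms and the extra axioms `Ax`,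
closed under modus ponens, uniform substitution, and both necessitation rules. -/
inductive Logic (Ax : Set BForm) : BForm → Prop
  | taut {A : BForm} : Tautology A → Logic Ax A
  | axKBox : Logic Ax (.imp (.box (.imp pLet qLet)) (.imp (.box pLet) (.box qLet)))
  | axKD : Logic Ax (.imp (.dbox (.imp pLet qLet)) (.imp (.dbox pLet) (.dbox qLet)))
  | axBD : Logic Ax (.imp pLet (.dbox (BForm.ddia pLet)))
  | ax4mD : Logic Ax (.imp (BForm.conj pLet (.dbox pLet)) (.dbox (.dbox pLet)))
  | axTBox : Logic Ax (.imp (.box pLet) pLet)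
  | ax4Box : Logic Ax (.imp (.box pLet) (.box (.box pLet)))
  | axDBox : Logic Ax (.imp (BForm.conj (.dbox pLet) pLet) (.box pLet))
  | extra {A : BForm} : A ∈ Ax → Logic Ax A
  | mp {A B : BForm} : Logic Ax (.imp A B) → Logic Ax A → Logic Ax B
  | subst {A : BForm} (σ : ℕ → BForm) : Logic Ax A → Logic Ax (substF σ A)
  | necBox {A : BForm} : Logic Ax A → Logic Ax (.box A)
  | necD {A : BForm} : Logic Ax A → Logic Ax (.dbox A)

/-- The axiom (DS): `[≠]p → ◇p`. -/
def dsAx : BForm := .imp (.dbox pLet) (BForm.dia pLet)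

/-- The axiom (AT₁): `[≠]p → [≠]□p`. -/
def at1Ax : BForm := .imp (.dbox pLet) (.dbox (.box pLet))

/-- The logic S4D. -/
def S4D : BForm → Prop := Logic ∅

/-- The logic S4DS = S4D + (DS). -/
def S4DS : BForm → Prop := Logic {dsAx}

/-- The logic S4DT1S = S4DS + (AT₁). -/
def S4DT1S : BForm → Prop := Logic {dsAx, at1Ax}

/-- `(W, R, R_D)` is an S4D-frame: `R` is reflexive and transitive, `R_D` is
symmetric and pseudo-transitive, and `R ⊆ R_D ∪ Id`. -/
structure IsS4DFrame {W : Type} (R RD : W → W → Prop) : Prop where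
  refl : ∀ x, R x x
  trans : ∀ ⦃x y z⦄, R x y → R y z → R x z
  symm : ∀ ⦃x y⦄, RD x y → RD y x
  ptrans : ∀ ⦃x y z⦄, RD x y → RD y z → x ≠ z → RD x z
  inc : ∀ ⦃x y⦄, R x y → RD x y ∨ x = y

/-- A T₁-frame: every `R_D`-irreflexive point is `R`-minimal. -/
def IsT1Frame {W : Type} (R RD : W → W → Prop) : Prop :=
  ∀ x, ¬ RD x x → ∀ y, R y x → y = x

/-- A DS-frame: every `R_D`-irreflexive point has an `R`-successor distinct from itself. -/
def IsDSFrame {W : Type} (R RD : W → W → Prop) : Prop :=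
  ∀ x, ¬ RD x x → ∃ y, y ≠ x ∧ R x y

/-- A cd-p-morphism from a topological space `X` onto a Kripke frame `(W, R, R_D)`. -/
structure IsCdPMorphism {X : Type} [TopologicalSpace X] {W : Type}
    (R RD : W → W → Prop) (f : X → W) : Prop where
  surj : Function.Surjective f
  cl : ∀ w : W, closure (f ⁻¹' {w}) = f ⁻¹' {v | R v w}
  diff : ∀ w : W, {x : X | ∃ y, y ≠ x ∧ f y = w} = f ⁻¹' {v | RD v w}

/-- A p-morphism between Kripke frames. -/
structure IsPMorphism {W W' : Type} (R RD : W → W → Prop) (R' RD' : W' → W' → Prop)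
    (f : W → W') : Prop where
  surj : Function.Surjective f
  forth : ∀ ⦃x y⦄, R x y → R' (f x) (f y)
  forthD : ∀ ⦃x y⦄, RD x y → RD' (f x) (f y)
  back : ∀ x z, R' (f x) z → ∃ y, R x y ∧ f y = z
  backD : ∀ x z, RD' (f x) z → ∃ y, RD x y ∧ f y = z

/-- The Alexandrov topology on `W` whose open sets are the `R`-upward-closed sets. -/
def alexandrov {W : Type} (R : W → W → Prop) : TopologicalSpace W where
  IsOpen U := ∀ ⦃x⦄, x ∈ U → ∀ ⦃y⦄, R x y → y ∈ U
  isOpen_univ := fun _ _ _ _ => trivial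
  isOpen_inter := fun _ _ hU hV x hx y hxy => ⟨hU hx.1 hxy, hV hx.2 hxy⟩
  isOpen_sUnion := fun _ hS x hx y hxy => by
    obtain ⟨U, hU, hxU⟩ := hx
    exact ⟨U, hU, hS U hU hxU hxy⟩

/-!
Soundness is an induction on derivations. Completeness uses the canonical model, whose points are
the maximal consistent sets and where `x` sees `y` through a modality `M` when `y` contains every
`A` with `M A ∈ x`. As truth at a point is membership in it, a formula valid in the canonical frame
is a theorem, and it remains to see that the axioms force the frame conditions.

* Pseudo-transitivity and `R ⊆ R_D ∪ Id` only concern distinct endpoints `x ≠ z`. Choose `B` in `x`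
  but not in `z`. If `[≠]A ∈ x`, then `¬B → A` and its `[≠]`-version both lie in `x`, so (4⁻_D) or
  (D_□) puts `¬B → A`, hence `A`, into `z`.
* (DS) makes the formulas that `x` passes on through `□` and through `[≠]` jointly consistent, so
  `x` has a common successor for both relations; it differs from `x` if `x` is irreflexive.
* (AT₁) makes `x R_D y R z` imply `x R_D z`. A predecessor `y ≠ x` of `x` satisfies `x R_D y R x`,
  so `x` is reflexive.
-/

/-! ### Soundness -/

theorem beval_imp {v : BForm → Bool} {A B : BForm} :
    beval v (.imp A B) = true ↔ (beval v A = true → beval v B = true) := by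
  simp only [beval]
  cases beval v A <;> simp

section Soundness

variable {W : Type} {R RD : W → W → Prop} {θ : ℕ → Set W} {x : W} {A B : BForm}

theorem ksat_conj : ksat R RD θ x (A.conj B) ↔ ksat R RD θ x A ∧ ksat R RD θ x B := by
  simp only [BForm.conj, BForm.neg, ksat]
  tauto

theorem ksat_dia : ksat R RD θ x A.dia ↔ ∃ y, R x y ∧ ksat R RD θ y A := by
  simp [BForm.dia, BForm.neg, ksat]

theorem ksat_ddia : ksat R RD θ x A.ddia ↔ ∃ y, RD x y ∧ ksat R RD θ y A := by
  simp [BForm.ddia, BForm.neg, ksat]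

theorem ksat_substF (σ : ℕ → BForm) :
    ksat R RD θ x (substF σ A) ↔ ksat R RD (fun n => {y | ksat R RD θ y (σ n)}) x A := by
  induction A generalizing x with
  | var n => rfl
  | bot => rfl
  | imp A B ihA ihB => simp only [substF, ksat, ihA, ihB]
  | box A ih => simp only [substF, ksat, ih]
  | dbox A ih => simp only [substF, ksat, ih]

open Classical in
theorem beval_decide_ksat :
    beval (fun C => decide (ksat R RD θ x C)) A = true ↔ ksat R RD θ x A := by
  induction A with
  | var n => simp [beval]
  | bot => simp [beval, ksat]
  | imp A B ihA ihB => rw [beval_imp, ihA, ihB, ksat]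
  | box A => simp [beval]
  | dbox A => simp [beval]

theorem Tautology.kvalid (hA : Tautology A) : kvalid R RD A :=
  fun _ _ => beval_decide_ksat.1 (hA _)

namespace IsS4DFrame

theorem kvalid_of_logic (hF : IsS4DFrame R RD) {Ax : Set BForm}
    (hAx : ∀ B ∈ Ax, kvalid R RD B) (hA : Logic Ax A) : kvalid R RD A := by
  induction hA with
  | taut h => exact h.kvalid
  | axKBox => exact fun θ x hpq hp y hxy => hpq y hxy (hp y hxy)
  | axKD => exact fun θ x hpq hp y hxy => hpq y hxy (hp y hxy)
  | axBD => exact fun θ x hp y hxy => ksat_ddia.2 ⟨x, hF.symm hxy, hp⟩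
  | ax4mD =>
    intro θ x h y hxy z hyz
    obtain ⟨hp, hDp⟩ := ksat_conj.1 h
    by_cases hxz : x = z
    · exact hxz ▸ hp
    · exact hDp z (hF.ptrans hxy hyz hxz)
  | axTBox => exact fun θ x hp => hp x (hF.refl x)
  | ax4Box => exact fun θ x hp y hxy z hyz => hp z (hF.trans hxy hyz)
  | axDBox =>
    intro θ x h y hxy
    obtain ⟨hDp, hp⟩ := ksat_conj.1 h
    rcases hF.inc hxy with hD | rfl
    · exact hDp y hD
    · exact hp
  | extra h => exact hAx _ h
  | mp _ _ ihAB ihA => exact fun θ x => ihAB θ x (ihA θ x)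
  | subst σ _ ih => exact fun θ x => (ksat_substF σ).2 (ih _ x)
  | necBox _ ih => exact fun θ x y _ => ih θ y
  | necD _ ih => exact fun θ x y _ => ih θ y

theorem kvalid_dsAx (hF : IsS4DFrame R RD) (hDS : IsDSFrame R RD) : kvalid R RD dsAx := by
  intro θ x hDp
  refine ksat_dia.2 ?_
  by_cases hx : RD x x
  · exact ⟨x, hF.refl x, hDp x hx⟩
  · obtain ⟨y, hyx, hxy⟩ := hDS x hx
    exact ⟨y, hxy, hDp y ((hF.inc hxy).resolve_right hyx.symm)⟩

theorem kvalid_at1Ax (hF : IsS4DFrame R RD) (hT : IsT1Frame R RD) : kvalid R RD at1Ax := by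
  intro θ x hDp y hxy z hyz
  refine hDp z ?_
  rcases hF.inc hyz with hD | rfl
  · by_cases hxz : x = z
    · subst hxz
      by_contra hx
      exact hx (hT x hx y hyz ▸ hxy)
    · exact hF.ptrans hxy hD hxz
  · exact hxy

end IsS4DFrame

end Soundness

/-! ### Derivations from hypotheses -/

namespace Tautology

variable (A B C : BForm)

theorem imp_self : Tautology (.imp A A) :=
  fun _ => beval_imp.2 id

theorem imp_imp_self : Tautology (.imp A (.imp B A)) := by
  intro v
  simp only [beval_imp]
  tauto

theorem imp_distrib : Tautology (.imp (.imp A (.imp B C)) (.imp (.imp A B) (.imp A C))) := by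
  intro v
  simp only [beval_imp]
  tauto

theorem neg_neg_imp : Tautology (.imp A.neg.neg A) := by
  intro v
  cases h : beval v A <;> simp [BForm.neg, beval, h]

end Tautology

/-- Derivability of a formula from a set `Γ` of hypotheses in the logic with extra axioms `Ax`.
Only modus ponens is available, so that necessitation applies to theorems alone and the deduction
theorem holds. -/
inductive DerivableFrom (Ax Γ : Set BForm) : BForm → Prop
  | thm {A : BForm} : Logic Ax A → DerivableFrom Ax Γ A
  | hyp {A : BForm} : A ∈ Γ → DerivableFrom Ax Γ A
  | mp {A B : BForm} : DerivableFrom Ax Γ (.imp A B) → DerivableFrom Ax Γ A → DerivableFrom Ax Γ B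

namespace DerivableFrom

variable {Ax Γ Δ : Set BForm} {A B : BForm}

theorem mono (hΓΔ : Γ ⊆ Δ) (h : DerivableFrom Ax Γ A) : DerivableFrom Ax Δ A := by
  induction h with
  | thm h => exact .thm h
  | hyp h => exact .hyp (hΓΔ h)
  | mp _ _ ihAB ihA => exact .mp ihAB ihA

theorem logic_of_empty (h : DerivableFrom Ax ∅ A) : Logic Ax A := by
  induction h with
  | thm h => exact h
  | hyp h => exact h.elim
  | mp _ _ ihAB ihA => exact .mp ihAB ihA

theorem imp_intro (h : DerivableFrom Ax Γ B) : DerivableFrom Ax Γ (.imp A B) :=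
  .mp (.thm (.taut (.imp_imp_self B A))) h

theorem deduction (h : DerivableFrom Ax (insert A Γ) B) : DerivableFrom Ax Γ (.imp A B) := by
  induction h with
  | thm h => exact imp_intro (.thm h)
  | hyp h =>
    rcases h with rfl | h
    · exact .thm (.taut (.imp_self _))
    · exact imp_intro (.hyp h)
  | mp _ _ ihBC ihB => exact .mp (.mp (.thm (.taut (.imp_distrib _ _ _))) ihBC) ihB

theorem of_insert_neg (h : DerivableFrom Ax (insert A.neg Γ) .bot) : DerivableFrom Ax Γ A :=
  .mp (.thm (.taut (.neg_neg_imp A))) h.deduction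

theorem of_bot (h : DerivableFrom Ax Γ .bot) : DerivableFrom Ax Γ A :=
  of_insert_neg (h.mono (Set.subset_insert _ _))

theorem exists_mem_of_sUnion {c : Set (Set BForm)} (hc : DirectedOn (· ⊆ ·) c)
    (hne : c.Nonempty) (h : DerivableFrom Ax (⋃₀ c) A) : ∃ Γ ∈ c, DerivableFrom Ax Γ A := by
  induction h with
  | thm h => exact ⟨_, hne.some_mem, .thm h⟩
  | hyp h =>
    obtain ⟨Γ, hΓ, hA⟩ := h
    exact ⟨Γ, hΓ, .hyp hA⟩
  | mp _ _ ihAB ihA =>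
    obtain ⟨Γ, hΓ, hAB⟩ := ihAB
    obtain ⟨Δ, hΔ, hA⟩ := ihA
    obtain ⟨Θ, hΘ, hΓΘ, hΔΘ⟩ := hc Γ hΓ Δ hΔ
    exact ⟨Θ, hΘ, .mp (hAB.mono hΓΘ) (hA.mono hΔΘ)⟩

end DerivableFrom

/-! ### Maximal consistent sets -/

/-- The points of the canonical model of the logic with extra axioms `Ax`: the maximal consistent
sets of formulas, where a set is consistent if it does not derive `⊥`. -/
def CanonicalPoint (Ax : Set BForm) : Type :=
  {Γ : Set BForm // Maximal (fun Δ => ¬ DerivableFrom Ax Δ .bot) Γ}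

instance (Ax : Set BForm) : SetLike (CanonicalPoint Ax) BForm where
  coe x := x.1
  coe_injective := Subtype.val_injective

theorem exists_canonicalPoint_superset {Ax Γ : Set BForm} (hΓ : ¬ DerivableFrom Ax Γ .bot) :
    ∃ x : CanonicalPoint Ax, Γ ⊆ x := by
  obtain ⟨x, hΓx, hx⟩ := zorn_subset_nonempty {Δ | ¬ DerivableFrom Ax Δ .bot}
    (fun c hc hchain hne => ⟨⋃₀ c, fun hbot => by
      obtain ⟨Δ, hΔ, hΔbot⟩ := hbot.exists_mem_of_sUnion hchain.directedOn hne
      exact hc hΔ hΔbot, fun _ => Set.subset_sUnion_of_mem⟩) Γ hΓ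
  exact ⟨⟨x, hx⟩, hΓx⟩

namespace CanonicalPoint

variable {Ax : Set BForm} {x y : CanonicalPoint Ax} {A B : BForm}

theorem derives_neg_of_notMem (hA : A ∉ x) : DerivableFrom Ax x A.neg := by
  have hbot : DerivableFrom Ax (insert A x) .bot := by
    by_contra hcons
    exact hA (x.2.mem_of_prop_insert hcons)
  exact hbot.deduction

theorem mem_of_derives (h : DerivableFrom Ax x A) : A ∈ x := by
  by_contra hA
  exact x.2.prop ((derives_neg_of_notMem hA).mp h)

theorem mem_of_logic (h : Logic Ax A) : A ∈ x :=
  mem_of_derives (.thm h)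

theorem bot_notMem : BForm.bot ∉ x :=
  fun h => x.2.prop (.hyp h)

theorem mem_imp : .imp A B ∈ x ↔ (A ∈ x → B ∈ x) := by
  refine ⟨fun hAB hA => mem_of_derives ((DerivableFrom.hyp hAB).mp (.hyp hA)), fun h => ?_⟩
  by_cases hA : A ∈ x
  · exact mem_of_derives (DerivableFrom.hyp (h hA)).imp_intro
  · have hbot : DerivableFrom Ax (insert A x) .bot :=
      ((derives_neg_of_notMem hA).mono (Set.subset_insert _ _)).mp (.hyp (Set.mem_insert _ _))
    exact mem_of_derives hbot.of_bot.deduction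

theorem mem_neg : A.neg ∈ x ↔ A ∉ x := by
  simp only [BForm.neg, mem_imp, bot_notMem, imp_false]

theorem mem_conj : A.conj B ∈ x ↔ A ∈ x ∧ B ∈ x := by
  simp only [BForm.conj, mem_neg, mem_imp]
  tauto

theorem mem_of_logic_imp (h : Logic Ax (.imp A B)) (hA : A ∈ x) : B ∈ x :=
  mem_imp.1 (mem_of_logic h) hA

theorem exists_mem_notMem_of_ne (hxy : x ≠ y) : ∃ A ∈ x, A ∉ y :=
  Set.not_subset.1 fun h => hxy (SetLike.coe_injective (x.2.eq_of_subset y.2.prop h))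

end CanonicalPoint

namespace DerivableFrom

open CanonicalPoint

variable {Ax Γ Δ : Set BForm} {A : BForm}

theorem iff_forall_mem : DerivableFrom Ax Γ A ↔ ∀ x : CanonicalPoint Ax, Γ ⊆ x → A ∈ x := by
  refine ⟨fun h x hΓ => mem_of_derives (h.mono hΓ), fun h => ?_⟩
  by_contra hA
  obtain ⟨x, hx⟩ := exists_canonicalPoint_superset fun hbot => hA (of_insert_neg hbot)
  obtain ⟨hnA, hΓ⟩ := Set.insert_subset_iff.1 hx
  exact mem_neg.1 hnA (h x hΓ)

theorem exists_imp_of_union (h : DerivableFrom Ax (Γ ∪ Δ) A) :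
    ∃ B, DerivableFrom Ax Δ B ∧ DerivableFrom Ax Γ (.imp B A) := by
  induction h with
  | @thm A h => exact ⟨A, .thm h, .thm (.taut (.imp_self A))⟩
  | @hyp A h =>
    rcases h with hΓ | hΔ
    · exact ⟨.imp .bot .bot, .thm (.taut (.imp_self .bot)), (hyp hΓ).imp_intro⟩
    · exact ⟨A, .hyp hΔ, .thm (.taut (.imp_self A))⟩
  | mp _ _ ihAC ihA =>
    obtain ⟨B, hB, hBAC⟩ := ihAC
    obtain ⟨D, hD, hDA⟩ := ihA
    simp only [iff_forall_mem, mem_imp] at hB hD hBAC hDA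
    refine ⟨B.conj D, iff_forall_mem.2 fun x hx => mem_conj.2 ⟨hB x hx, hD x hx⟩,
      iff_forall_mem.2 fun x hx => mem_imp.2 fun hBD => ?_⟩
    obtain ⟨hBx, hDx⟩ := mem_conj.1 hBD
    exact hBAC x hx hBx (hDA x hx hDx)

end DerivableFrom

/-! ### Normal modalities -/

/-- `M` is a normal modality of the logic with extra axioms `Ax`: it satisfies the axiom (K) and
necessitation. This allows `□` and `[≠]` to be treated together. -/
structure IsNormalModality (Ax : Set BForm) (M : BForm → BForm) : Prop where
  k : ∀ A B, Logic Ax (.imp (M (.imp A B)) (.imp (M A) (M B)))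
  nec : ∀ {A}, Logic Ax A → Logic Ax (M A)

theorem isNormalModality_box (Ax : Set BForm) : IsNormalModality Ax .box where
  k A B := Logic.subst (fun n => if n = 0 then A else B) .axKBox
  nec := .necBox

theorem isNormalModality_dbox (Ax : Set BForm) : IsNormalModality Ax .dbox where
  k A B := Logic.subst (fun n => if n = 0 then A else B) .axKD
  nec := .necD

/-- The accessibility relation of the canonical model that interprets the modality `M`. -/
def canonicalRel {Ax : Set BForm} (M : BForm → BForm) (x y : CanonicalPoint Ax) : Prop :=
  ∀ ⦃A⦄, M A ∈ x → A ∈ y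

namespace IsNormalModality

open CanonicalPoint

variable {Ax : Set BForm} {M N : BForm → BForm} {x y : CanonicalPoint Ax} {A : BForm}

theorem mem_of_derives (hM : IsNormalModality Ax M) (h : DerivableFrom Ax {B | M B ∈ x} A) :
    M A ∈ x := by
  induction h with
  | thm h => exact mem_of_logic (hM.nec h)
  | hyp h => exact h
  | mp _ _ ihAB ihA => exact mem_imp.1 (mem_of_logic_imp (hM.k _ _) ihAB) ihA

theorem mem_iff (hM : IsNormalModality Ax M) :
    M A ∈ x ↔ ∀ y, canonicalRel M x y → A ∈ y :=
  ⟨fun hA _ hxy => hxy hA, fun h => hM.mem_of_derives (DerivableFrom.iff_forall_mem.2 h)⟩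

theorem neg_neg_mem_iff (hM : IsNormalModality Ax M) :
    (M A.neg).neg ∈ x ↔ ∃ y, canonicalRel M x y ∧ A ∈ y := by
  simp only [mem_neg, hM.mem_iff, not_forall, not_not, exists_prop]

theorem exists_mem_and_mem_of_ne (hM : IsNormalModality Ax M) (hxy : x ≠ y) (hA : M A ∈ x) :
    ∃ C, C ∈ x ∧ M C ∈ x ∧ (C ∈ y → A ∈ y) := by
  obtain ⟨B, hBx, hBy⟩ := exists_mem_notMem_of_ne hxy
  refine ⟨.imp B.neg A, mem_imp.2 fun hnB => absurd hBx (mem_neg.1 hnB), ?_,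
    fun hC => mem_imp.1 hC (mem_neg.2 hBy)⟩
  exact hM.mem_iff.2 fun z hxz => mem_imp.2 fun _ => hxz hA

theorem exists_common_successor (hM : IsNormalModality Ax M) (hN : IsNormalModality Ax N)
    (h : ∀ A, N A ∈ x → ∃ y, canonicalRel M x y ∧ A ∈ y) :
    ∃ y, canonicalRel M x y ∧ canonicalRel N x y := by
  have hcons : ¬ DerivableFrom Ax ({A | M A ∈ x} ∪ {A | N A ∈ x}) .bot := by
    intro hbot
    obtain ⟨B, hB, hnB⟩ := hbot.exists_imp_of_union
    obtain ⟨y, hxy, hBy⟩ := h B (hN.mem_of_derives hB)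
    exact mem_neg.1 (hxy (hM.mem_of_derives hnB)) hBy
  obtain ⟨y, hy⟩ := exists_canonicalPoint_superset hcons
  exact ⟨y, fun _ hA => hy (.inl hA), fun _ hA => hy (.inr hA)⟩

end IsNormalModality

/-! ### The canonical frame -/

section CanonicalFrame

open CanonicalPoint

variable {Ax : Set BForm}

namespace Logic

variable (A : BForm)

theorem imp_dbox_ddia : Logic Ax (.imp A (.dbox A.ddia)) :=
  subst (fun _ => A) .axBD

theorem conj_dbox_imp_dbox_dbox : Logic Ax (.imp (A.conj (.dbox A)) (.dbox (.dbox A))) :=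
  subst (fun _ => A) .ax4mD

theorem box_imp_self : Logic Ax (.imp (.box A) A) :=
  subst (fun _ => A) .axTBox

theorem box_imp_box_box : Logic Ax (.imp (.box A) (.box (.box A))) :=
  subst (fun _ => A) .ax4Box

theorem dbox_conj_imp_box : Logic Ax (.imp (.conj (.dbox A) A) (.box A)) :=
  subst (fun _ => A) .axDBox

theorem dbox_imp_dia (h : dsAx ∈ Ax) : Logic Ax (.imp (.dbox A) A.dia) :=
  subst (fun _ => A) (.extra h)

theorem dbox_imp_dbox_box (h : at1Ax ∈ Ax) : Logic Ax (.imp (.dbox A) (.dbox (.box A))) :=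
  subst (fun _ => A) (.extra h)

end Logic

theorem canonicalRel_dbox_symm {x y : CanonicalPoint Ax} (hxy : canonicalRel .dbox x y) :
    canonicalRel .dbox y x := by
  intro A hA
  by_contra hAx
  have hdia : A.neg.ddia ∈ y := hxy (mem_of_logic_imp (.imp_dbox_ddia A.neg) (mem_neg.2 hAx))
  obtain ⟨z, hyz, hAz⟩ := (isNormalModality_dbox Ax).neg_neg_mem_iff.1 hdia
  exact mem_neg.1 hAz (hyz hA)

theorem isS4DFrame_canonicalRel :
    IsS4DFrame (W := CanonicalPoint Ax) (canonicalRel .box) (canonicalRel .dbox) where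
  refl x A hA := mem_of_logic_imp (.box_imp_self A) hA
  trans x y z hxy hyz A hA := hyz (hxy (mem_of_logic_imp (.box_imp_box_box A) hA))
  symm _ _ := canonicalRel_dbox_symm
  ptrans x y z hxy hyz hxz A hA := by
    obtain ⟨C, hC, hDC, hCA⟩ := (isNormalModality_dbox Ax).exists_mem_and_mem_of_ne hxz hA
    exact hCA (hyz (hxy (mem_of_logic_imp (.conj_dbox_imp_dbox_dbox C) (mem_conj.2 ⟨hC, hDC⟩))))
  inc x y hxy := by
    refine or_iff_not_imp_right.2 fun hne A hA => ?_
    obtain ⟨C, hC, hDC, hCA⟩ := (isNormalModality_dbox Ax).exists_mem_and_mem_of_ne hne hA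
    exact hCA (hxy (mem_of_logic_imp (.dbox_conj_imp_box C) (mem_conj.2 ⟨hDC, hC⟩)))

theorem isDSFrame_canonicalRel (h : dsAx ∈ Ax) :
    IsDSFrame (W := CanonicalPoint Ax) (canonicalRel .box) (canonicalRel .dbox) := by
  intro x hx
  obtain ⟨y, hxy, hDxy⟩ := (isNormalModality_box Ax).exists_common_successor
    (isNormalModality_dbox Ax) fun A hA => (isNormalModality_box Ax).neg_neg_mem_iff.1
      (mem_of_logic_imp (.dbox_imp_dia A h) hA)
  refine ⟨y, ?_, hxy⟩
  rintro rfl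
  exact hx hDxy

theorem isT1Frame_canonicalRel (h : at1Ax ∈ Ax) :
    IsT1Frame (W := CanonicalPoint Ax) (canonicalRel .box) (canonicalRel .dbox) := by
  intro x hx y hyx
  by_contra hne
  have hxy : canonicalRel .dbox x y :=
    canonicalRel_dbox_symm ((isS4DFrame_canonicalRel.inc hyx).resolve_right hne)
  exact hx fun A hA => hyx (hxy (mem_of_logic_imp (.dbox_imp_dbox_box A h) hA))

theorem ksat_canonicalRel_iff_mem {x : CanonicalPoint Ax} {A : BForm} :
    ksat (canonicalRel .box) (canonicalRel .dbox) (fun n => {y | BForm.var n ∈ y}) x A ↔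
      A ∈ x := by
  induction A generalizing x with
  | var n => rfl
  | bot => simp only [ksat, bot_notMem]
  | imp A B ihA ihB => simp only [ksat, ihA, ihB, mem_imp]
  | box A ih => simp only [ksat, ih, (isNormalModality_box Ax).mem_iff]
  | dbox A ih => simp only [ksat, ih, (isNormalModality_dbox Ax).mem_iff]

theorem logic_of_kvalid_canonicalRel {A : BForm}
    (h : kvalid (W := CanonicalPoint Ax) (canonicalRel .box) (canonicalRel .dbox) A) :
    Logic Ax A :=
  (DerivableFrom.iff_forall_mem.2 fun x _ => ksat_canonicalRel_iff_mem.1 (h _ x)).logic_of_empty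

theorem logic_iff_forall_kvalid {C : ∀ {W : Type}, (W → W → Prop) → (W → W → Prop) → Prop}
    (hAx : ∀ {W : Type} {R RD : W → W → Prop}, IsS4DFrame R RD → C R RD →
      ∀ B ∈ Ax, kvalid R RD B)
    (hC : C (W := CanonicalPoint Ax) (canonicalRel .box) (canonicalRel .dbox)) (A : BForm) :
    Logic Ax A ↔
      ∀ (W : Type) (R RD : W → W → Prop), IsS4DFrame R RD → C R RD → kvalid R RD A :=
  ⟨fun h _ _ _ hF hR => hF.kvalid_of_logic (hAx hF hR) h,
    fun h => logic_of_kvalid_canonicalRel (h _ _ _ isS4DFrame_canonicalRel hC)⟩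

end CanonicalFrame

/-- Kripke completeness of S4D, S4DS and S4DT1S with respect to
S4D-frames, DS S4D-frames, and DS T₁ S4D-frames, respectively. -/
theorem kripke_completeness (A : BForm) :
    (S4D A ↔ ∀ (W : Type) (R RD : W → W → Prop), IsS4DFrame R RD → kvalid R RD A) ∧
    (S4DS A ↔ ∀ (W : Type) (R RD : W → W → Prop), IsS4DFrame R RD → IsDSFrame R RD →
      kvalid R RD A) ∧
    (S4DT1S A ↔ ∀ (W : Type) (R RD : W → W → Prop), IsS4DFrame R RD → IsDSFrame R RD →
      IsT1Frame R RD → kvalid R RD A) := by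
  refine ⟨?_, ?_, ?_⟩
  · simpa only [S4D, forall_const] using
      logic_iff_forall_kvalid (Ax := ∅) (C := fun _ _ => True) (by simp) trivial A
  · refine logic_iff_forall_kvalid (Ax := {dsAx}) (C := IsDSFrame) ?_
      (isDSFrame_canonicalRel rfl) A
    rintro W R RD hF hDS _ rfl
    exact hF.kvalid_dsAx hDS
  · simpa only [S4DT1S, and_imp] using
      logic_iff_forall_kvalid (Ax := {dsAx, at1Ax})
        (C := fun R RD => IsDSFrame R RD ∧ IsT1Frame R RD)
        (by
          rintro W R RD hF ⟨hDS, hT⟩ _ (rfl | rfl)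
          · exact hF.kvalid_dsAx hDS
          · exact hF.kvalid_at1Ax hT)
        ⟨isDSFrame_canonicalRel (.inl rfl), isT1Frame_canonicalRel (.inr rfl)⟩ A
end

section
/- If F = (W, R, R_D) is a finite Kripke frame, X is a topological space, and f : X → W is a cd-p-morphism from X onto F, then every bimodal formula valid in X (under topological semantics) is valid in F (under Kripke semantics). -/
section

open Filter Topology

variable {X : Type} [TopologicalSpace X]

theorem tsat_box_iff_eventually (θ : ℕ → Set X) (x : X) (A : BForm) :
    tsat θ x (.box A) ↔ ∀ᶠ y in 𝓝 x, tsat θ y A := by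
  rw [tsat, eventually_nhds_iff]
  exact exists_congr fun _ => and_rotate.symm

variable {W : Type} {R RD : W → W → Prop} {f : X → W}

namespace IsCdPMorphism

theorem frequently_eq_iff (hf : IsCdPMorphism R RD f) {x : X} {w : W} :
    (∃ᶠ y in 𝓝 x, f y = w) ↔ R (f x) w :=
  mem_closure_iff_frequently.symm.trans (Set.ext_iff.1 (hf.cl w) x)

theorem exists_ne_eq_iff (hf : IsCdPMorphism R RD f) {x : X} {w : W} :
    (∃ y, y ≠ x ∧ f y = w) ↔ RD (f x) w :=
  Set.ext_iff.1 (hf.diff w) x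

theorem rel_refl (hf : IsCdPMorphism R RD f) (w : W) : R w w := by
  obtain ⟨x, rfl⟩ := hf.surj w
  exact hf.frequently_eq_iff.1 (mem_closure_iff_frequently.1 (subset_closure rfl))

theorem rel_trans (hf : IsCdPMorphism R RD f) {u v w : W} (huv : R u v) (hvw : R v w) :
    R u w := by
  obtain ⟨x, rfl⟩ := hf.surj u
  have near_v : ∃ᶠ y in 𝓝 x, f y = v := hf.frequently_eq_iff.2 huv
  have near_near_w : ∃ᶠ y in 𝓝 x, ∃ᶠ z in 𝓝 y, f z = w :=
    near_v.mono fun y hy => hf.frequently_eq_iff.2 (hy ▸ hvw)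
  exact hf.frequently_eq_iff.1 (frequently_frequently_nhds.1 near_near_w)

theorem continuous_alexandrov [Finite W] (hf : IsCdPMorphism R RD f) :
    Continuous[_, alexandrov R] f := by
  refine continuous_def.2 fun U hU => isOpen_iff_eventually.2 fun x hx => ?_
  have each_value (w : W) : ∀ᶠ y in 𝓝 x, f y = w → w ∈ U :=
    eventually_imp_distrib_right.2 fun hw => hU hx (hf.frequently_eq_iff.1 hw)
  exact (eventually_all.2 each_value).mono fun y hy => hy (f y) rfl

theorem eventually_rel (hf : IsCdPMorphism R RD f) (hc : Continuous[_, alexandrov R] f) (x : X) :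
    ∀ᶠ y in 𝓝 x, R (f x) (f y) := by
  have successors_open : IsOpen[alexandrov R] {w | R (f x) w} := fun _ hv _ hvw =>
    hf.rel_trans hv hvw
  exact (continuous_def.1 hc _ successors_open).mem_nhds (hf.rel_refl (f x))

theorem eventually_comp_iff (hf : IsCdPMorphism R RD f) (hc : Continuous[_, alexandrov R] f)
    (x : X) (p : W → Prop) : (∀ᶠ y in 𝓝 x, p (f y)) ↔ ∀ w, R (f x) w → p w := by
  constructor
  · intro h w hw
    obtain ⟨y, rfl, hy⟩ := ((hf.frequently_eq_iff.2 hw).and_eventually h).exists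
    exact hy
  · exact fun h => (hf.eventually_rel hc x).mono fun y => h (f y)

theorem forall_ne_comp_iff (hf : IsCdPMorphism R RD f) (x : X) (p : W → Prop) :
    (∀ y, y ≠ x → p (f y)) ↔ ∀ w, RD (f x) w → p w := by
  simp only [← hf.exists_ne_eq_iff]
  constructor
  · rintro h w ⟨y, hy, rfl⟩
    exact h y hy
  · exact fun h y hy => h (f y) ⟨y, hy, rfl⟩

theorem tsat_preimage_iff_ksat (hf : IsCdPMorphism R RD f) (hc : Continuous[_, alexandrov R] f)
    (θ : ℕ → Set W) (A : BForm) (x : X) :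
    tsat (fun n => f ⁻¹' θ n) x A ↔ ksat R RD θ (f x) A := by
  induction A generalizing x with
  | var n => rfl
  | bot => rfl
  | imp A B ihA ihB => exact imp_congr (ihA x) (ihB x)
  | box A ih =>
    simp only [tsat_box_iff_eventually, ih, ksat]
    exact hf.eventually_comp_iff hc x (ksat R RD θ · A)
  | dbox A ih =>
    simp only [tsat, ih, ksat]
    exact hf.forall_ne_comp_iff x (ksat R RD θ · A)

end IsCdPMorphism

theorem cd_p_morphism_transfers_validity_general (hf : IsCdPMorphism R RD f)
    (hc : Continuous[_, alexandrov R] f) {A : BForm} (hA : tvalid X A) : kvalid R RD A := by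
  intro θ w
  obtain ⟨x, rfl⟩ := hf.surj w
  exact (hf.tsat_preimage_iff_ksat hc θ A x).1 (hA _ x)

end

/-- a cd-p-morphism from a topological space `X` onto a finite Kripke
frame `F` transfers validity: every formula valid in `X` is valid in `F`. -/
theorem cd_p_morphism_transfers_validity {X : Type} [TopologicalSpace X]
    {W : Type} [Finite W] (R RD : W → W → Prop) (f : X → W)
    (hf : IsCdPMorphism R RD f) :
    ∀ A : BForm, tvalid X A → kvalid R RD A :=
  fun _ => cd_p_morphism_transfers_validity_general hf hf.continuous_alexandrov
end
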